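/- Echelon subgroups of free groups are compressed: if H is an echelon subgroup of the free group F_n of finite rank n and G is any subgroup with H ≤ G ≤ F_n, then rk(H) ≤ rk(G). -/

import Mathlib

/-- The rank of a subgroup: the minimal cardinality of a generating set.
For subgroups of free groups (which are free by Nielsen–Schreier) this is the
cardinality of a free basis. -/
noncomputable def rk {G : Type*} [Group G] (H : Subgroup G) : Cardinal :=
  ⨅ S : {S : Set G // Subgroup.closure S = H}, Cardinal.mk S.1

/-- A subgroup `H` is inert if `rk (H ⊓ K) ≤ rk K` for every finitely generated `K`. -/
def IsInert {G : Type*} [Group G] (H : Subgroup G) : Prop :=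
  ∀ K : Subgroup G, K.FG → rk (H ⊓ K) ≤ rk K

/-- `stage x i` is the subgroup generated by the first `i` elements of `x`. -/
def stage {n : ℕ} {F : Type*} [Group F] (x : Fin n → F) (i : ℕ) : Subgroup F :=
  Subgroup.closure (x '' {j | (j : ℕ) < i})

/-- `x` is an ordered free basis of `F`. -/
def IsOrderedBasis {n : ℕ} {F : Type*} [Group F] (x : Fin n → F) : Prop :=
  Function.Bijective (FreeGroup.lift x)

/-- `H` is in echelon form with respect to the ordered basis `x`:
`rk (H ⊓ F_i) ≤ rk (H ⊓ F_{i-1}) + 1` for `i = 1, …, n`. -/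
def InEchelonForm {n : ℕ} {F : Type*} [Group F] (x : Fin n → F) (H : Subgroup F) : Prop :=
  ∀ i : ℕ, i < n → rk (H ⊓ stage x (i + 1)) ≤ rk (H ⊓ stage x i) + 1

/-- `H` is an echelon subgroup: it is in echelon form with respect to
some ordered free basis. -/
def IsEchelon {n : ℕ} (H : Subgroup (FreeGroup (Fin n))) : Prop :=
  ∃ x : Fin n → FreeGroup (Fin n), IsOrderedBasis x ∧ InEchelonForm x H

/-- A 1-generator (subgroup) endomorphism: an endomorphism fixing all but (possibly)
one member of some set of free generators. -/
def IsOneGenEndo {G : Type*} [Group G] (φ : G →* G) : Prop :=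
  ∃ (ι : Type) (b : FreeGroupBasis ι G) (s : Set ι),
    s.Subsingleton ∧ ∀ i ∉ s, φ (b i) = b i

/-- The subgroup of points fixed by an endomorphism. -/
def fixedSubgroup {G : Type*} [Group G] (φ : G →* G) : Subgroup G where
  carrier := {g | φ g = g}
  one_mem' := by simp
  mul_mem' := by intro a b ha hb; simp only [Set.mem_setOf_eq, map_mul] at *; rw [ha, hb]
  inv_mem' := by intro a ha; simp only [Set.mem_setOf_eq, map_inv] at *; rw [ha]

/-- An element is primitive if it belongs to some free basis. -/
def IsPrimitive {n : ℕ} (g : FreeGroup (Fin n)) : Prop :=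
  ∃ x : Fin n → FreeGroup (Fin n), IsOrderedBasis x ∧ ∃ j, x j = g

/-!
Let `A` be a free factor generated by part of a basis of `F`, and let `G ≤ F`. Multiplication by
coset representatives turns elements of `A` into elements of `G ⊓ A`, which defines a cocycle of `A`
on the orbit of the base point of `F ⧸ G`. A cocycle of a free group is determined freely by its
values on a basis, so this one extends to `F` and to the whole of `F ⧸ G`; restricting the
extension to the stabilizer of the base point gives a retraction of `G` onto `G ⊓ A`. Free groups of
finite rank are Hopfian, so `rk (G ⊓ A) + 1 ≤ rk G` unless `G ≤ A`.

Applied to `A = F_i` and to `G ⊓ F_{i+1}`, this says that the rank of `G ⊓ F_i` increases by at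
least one at every step at which `G ⊓ F_i` grows. The rank of `H ⊓ F_i` increases by at most one at
such a step, and `H ⊓ F_i` stays constant at all other steps because `H ≤ G`.
-/

universe u

section FreeGroupBasis

variable {ι F : Type*} [Group F]

theorem closure_range_freeGroupBasis (b : FreeGroupBasis ι F) :
    Subgroup.closure (Set.range b) = ⊤ := by
  rw [← FreeGroup.lift_surjective_iff_closure_range_eq_top]
  have hlift : FreeGroup.lift b = b.repr.symm.toMonoidHom := FreeGroup.ext_hom _ _ fun i => by
    simp only [FreeGroup.lift_apply_of]; rfl
  rw [hlift]
  exact b.repr.symm.surjective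

/-- The free group basis consisting of the entries of an ordered basis. -/
noncomputable def IsOrderedBasis.freeGroupBasis {n : ℕ} {x : Fin n → F} (hx : IsOrderedBasis x) :
    FreeGroupBasis (Fin n) F :=
  .ofRepr (MulEquiv.ofBijective (FreeGroup.lift x) hx).symm

theorem IsOrderedBasis.coe_freeGroupBasis {n : ℕ} {x : Fin n → F} (hx : IsOrderedBasis x) :
    ⇑hx.freeGroupBasis = x :=
  funext fun _ => FreeGroup.lift_apply_of

end FreeGroupBasis

theorem exists_perm_eq_of_eq_mul {G : Type*} [Group G] (S : Set G) [Finite S] (a : G) :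
    ∃ σ : Equiv.Perm S, ∀ x y : S, (y : G) = a * x → σ x = y := by
  obtain ⟨σ, hσ⟩ := Equiv.Perm.exists_extending_pair
    (fun x : {x : S // a * x ∈ S} => x.1) (fun x => (⟨a * x, x.2⟩ : S))
    Subtype.val_injective (fun x y h => by simpa [Subtype.ext_iff] using h)
  refine ⟨σ, fun x y h => ?_⟩
  have hx : a * x ∈ S := h ▸ y.2
  exact (hσ ⟨x, hx⟩).trans (Subtype.ext h.symm)

theorem lift_mk_apply_one_eq_mk {ι : Type*} {S : Set (FreeGroup ι)} {σ : ι → Equiv.Perm S}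
    (hσ : ∀ i (x y : S), (y : FreeGroup ι) = FreeGroup.of i * (x : FreeGroup ι) → σ i x = y)
    (h1 : 1 ∈ S) (w : List (ι × Bool)) (hw : ∀ t, t <:+ w → FreeGroup.mk t ∈ S) :
    FreeGroup.lift σ (FreeGroup.mk w) ⟨1, h1⟩ = ⟨FreeGroup.mk w, hw w w.suffix_refl⟩ := by
  induction w with
  | nil => rfl
  | cons a t ih =>
    have ht := ih fun u hu => hw u (hu.trans (t.suffix_cons a))
    obtain ⟨i, _ | _⟩ := a
    · have hmk : FreeGroup.mk ((i, false) :: t) = (FreeGroup.of i)⁻¹ * FreeGroup.mk t := rfl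
      simp only [hmk, map_mul, map_inv, Equiv.Perm.mul_apply, ht, FreeGroup.lift_apply_of,
        Equiv.Perm.inv_eq_iff_eq]
      exact (hσ i _ _ (mul_inv_cancel_left _ _).symm).symm
    · have hmk : FreeGroup.mk ((i, true) :: t) = FreeGroup.of i * FreeGroup.mk t := rfl
      simp only [hmk, map_mul, Equiv.Perm.mul_apply, ht, FreeGroup.lift_apply_of]
      exact hσ i _ _ rfl

theorem exists_finite_monoidHom_ne_one {ι : Type*} {g : FreeGroup ι} (hg : g ≠ 1) :
    ∃ (S : Set (FreeGroup ι)) (_ : Finite S) (f : FreeGroup ι →* Equiv.Perm S), f g ≠ 1 := by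
  classical
  -- The generators act on the suffixes of the reduced word of `g` by left multiplication, so far as
  -- it is defined there; extended to permutations, this action takes `1` to `g`.
  let S : Set (FreeGroup ι) := FreeGroup.mk '' {t | t <:+ g.toWord}
  have hS : Finite S := by
    refine Set.Finite.image _ ((List.finite_toSet g.toWord.tails).subset ?_)
    exact fun t ht => (List.mem_tails _ _).2 ht
  choose σ hσ using fun i => exists_perm_eq_of_eq_mul S (FreeGroup.of i)
  have h1 : 1 ∈ S := ⟨[], List.nil_suffix, rfl⟩
  refine ⟨S, hS, FreeGroup.lift σ, fun h => hg ?_⟩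
  have hlift := lift_mk_apply_one_eq_mk hσ h1 g.toWord fun t ht => ⟨t, ht, rfl⟩
  simpa [FreeGroup.mk_toWord, h] using hlift.symm

theorem residuallyFinite_of_isFreeGroup (F : Type*) [Group F] [IsFreeGroup F] :
    Group.ResiduallyFinite F := by
  refine Group.residuallyFinite_of_forall_exists_finite_monoidHom fun g hg => ?_
  let e := IsFreeGroup.toFreeGroup F
  obtain ⟨S, hS, f, hf⟩ := exists_finite_monoidHom_ne_one (e.map_ne_one_iff.2 hg)
  exact ⟨Equiv.Perm S, inferInstance, inferInstance, f.comp e.toMonoidHom, hf⟩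

theorem finite_monoidHom_of_fg (G Q : Type*) [Group G] [Group Q] [Group.FG G] [Finite Q] :
    Finite (G →* Q) := by
  obtain ⟨S, hS⟩ := Group.FG.out (G := G)
  exact .of_injective (fun (f : G →* Q) (s : S) => f s) fun f f' h =>
    MonoidHom.eq_of_eqOn_dense hS fun s hs => congrFun h ⟨s, hs⟩

/-- Malcev: since `Hom(G, Q)` is finite, every homomorphism from `G` to a finite group `Q` factors
through `φ`, hence kills `ker φ`. -/
theorem injective_of_surjective_of_residuallyFinite {G : Type*} [Group G] [Group.FG G]
    [Group.ResiduallyFinite G] {φ : G →* G} (hφ : Function.Surjective φ) :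
    Function.Injective φ := by
  refine (injective_iff_map_eq_one φ).2 fun g hg => ?_
  refine Group.eq_one_iff_forall_finiteIndexNormalSubroup g fun N => ?_
  let Q := G ⧸ N.toSubgroup
  have := finite_monoidHom_of_fg G Q
  have hinj : Function.Injective fun f : G →* Q => f.comp φ :=
    fun _ _ h => (MonoidHom.cancel_right hφ).1 h
  obtain ⟨f, hf⟩ := Finite.surjective_of_injective hinj (QuotientGroup.mk' N.toSubgroup)
  have : QuotientGroup.mk' N.toSubgroup g = 1 := by
    rw [← hf]; simp [hg]
  exact (QuotientGroup.eq_one_iff g).1 this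

theorem injective_of_surjective_of_embedding_basis {G K ι : Type*} [Group G] [Group K]
    {S : Set G} (hS : Subgroup.closure S = ⊤) (hfin : S.Finite) (b : FreeGroupBasis ι K)
    (j : S ↪ ι) {φ : G →* K} (hφ : Function.Surjective φ) : Function.Injective φ := by
  let ψ : K →* G := b.lift (Function.extend j (↑) 1)
  have hψ : Function.Surjective ψ := by
    rw [← MonoidHom.range_eq_top, eq_top_iff, ← hS, Subgroup.closure_le]
    exact fun s hs => ⟨b (j ⟨s, hs⟩), by simp [ψ, j.injective.extend_apply]⟩
  have : Group.FG G := Group.fg_iff.2 ⟨S, hS, hfin⟩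
  have : Group.FG K := Group.fg_of_surjective hφ
  have : IsFreeGroup K := b.isFreeGroup
  have := residuallyFinite_of_isFreeGroup K
  have hφψ : Function.Injective (φ.comp ψ) :=
    injective_of_surjective_of_residuallyFinite (hφ.comp hψ)
  exact Function.Injective.of_comp_right hφψ hψ

section Rank

variable {G G' : Type u} [Group G] [Group G']

theorem rk_le_mk {H : Subgroup G} {S : Set H} (hS : Subgroup.closure S = ⊤) :
    rk H ≤ Cardinal.mk S := by
  have hcl : Subgroup.closure (Subtype.val '' S) = H := by
    rw [← Subgroup.coe_subtype, ← MonoidHom.map_closure, hS, ← MonoidHom.range_eq_map,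
      Subgroup.range_subtype]
  exact (ciInf_le' _ (⟨_, hcl⟩ : {S : Set G // Subgroup.closure S = H})).trans
    Cardinal.mk_image_le

theorem exists_closure_eq_top_mk_eq_rk (H : Subgroup G) :
    ∃ S : Set H, Subgroup.closure S = ⊤ ∧ Cardinal.mk S = rk H := by
  have : Nonempty {S : Set G // Subgroup.closure S = H} := ⟨⟨H, H.closure_eq⟩⟩
  obtain ⟨⟨S, rfl⟩, hS⟩ :=
    ciInf_mem fun S : {S : Set G // Subgroup.closure S = H} => Cardinal.mk S.1
  refine ⟨_, Subgroup.closure_closure_coe_preimage, ?_⟩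
  rw [Cardinal.mk_preimage_of_injective_of_subset_range]
  · exact hS
  · exact Subtype.val_injective
  · simp

theorem rk_le_rk_of_surjective {H : Subgroup G} {K : Subgroup G'} {f : H →* K}
    (hf : Function.Surjective f) : rk K ≤ rk H := by
  obtain ⟨S, hS, hrk⟩ := exists_closure_eq_top_mk_eq_rk H
  rw [← hrk]
  refine (rk_le_mk (S := f '' S) ?_).trans Cardinal.mk_image_le
  rw [← MonoidHom.map_closure, hS, ← MonoidHom.range_eq_map, MonoidHom.range_eq_top.2 hf]

theorem rk_le_mk_of_freeGroupBasis {ι : Type u} {H : Subgroup G} (b : FreeGroupBasis ι H) :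
    rk H ≤ Cardinal.mk ι :=
  (rk_le_mk (closure_range_freeGroupBasis b)).trans Cardinal.mk_range_le

theorem rk_add_one_le_of_surjective {F : Type u} [Group F] [IsFreeGroup F]
    {H : Subgroup G} {K : Subgroup F} {f : H →* K} (hf : Function.Surjective f)
    (hf' : ¬ Function.Injective f) : rk K + 1 ≤ rk H := by
  obtain hinf | hfin := le_or_gt Cardinal.aleph0 (rk H)
  · calc rk K + 1 ≤ rk H + 1 := by gcongr; exact rk_le_rk_of_surjective hf
      _ = rk H := Cardinal.add_one_eq hinf
  · obtain ⟨S, hS, hrk⟩ := exists_closure_eq_top_mk_eq_rk H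
    have hSfin : S.Finite := Cardinal.lt_aleph0_iff_set_finite.1 (hrk ▸ hfin)
    refine Cardinal.add_one_le_of_lt (lt_of_not_ge fun hle => hf' ?_)
    let b := IsFreeGroup.basis K
    obtain ⟨j⟩ := hrk.trans_le (hle.trans (rk_le_mk_of_freeGroupBasis b))
    exact injective_of_surjective_of_embedding_basis hS hSfin b j hf

end Rank

/-- `d` is a (multiplicative, possibly non-abelian) 1-cocycle for the action of `G` on `X`. -/
def IsCocycle {G X K : Type*} [Group G] [MulAction G X] [Group K] (d : G → X → K) : Prop :=
  ∀ g h x, d (g * h) x = d g (h • x) * d h x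

namespace IsCocycle

variable {G X K : Type*} [Group G] [MulAction G X] [Group K] {d e : G → X → K}

theorem map_one (hd : IsCocycle d) (x : X) : d 1 x = 1 := by
  simpa using hd 1 1 x

theorem map_inv (hd : IsCocycle d) (g : G) (x : X) : d g⁻¹ x = (d g (g⁻¹ • x))⁻¹ := by
  refine eq_inv_of_mul_eq_one_right ?_
  rw [← hd, mul_inv_cancel, hd.map_one]

theorem eq_of_eqOn_dense (hd : IsCocycle d) (he : IsCocycle e) {S : Set G}
    (hS : Subgroup.closure S = ⊤) (h : S.EqOn d e) : d = e := by
  ext g : 1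
  have hg : g ∈ Subgroup.closure S := hS ▸ Subgroup.mem_top g
  induction hg using Subgroup.closure_induction with
  | mem g hg => exact h hg
  | one => ext x; rw [hd.map_one, he.map_one]
  | mul g g' _ _ hg hg' => ext x; rw [hd, he, hg, hg']
  | inv g _ hg => ext x; rw [hd.map_inv, he.map_inv, hg]

/-- The homomorphism obtained by restricting a cocycle to a point stabilizer. -/
def stabilizerHom (hd : IsCocycle d) (x : X) : MulAction.stabilizer G x →* K where
  toFun g := d g x
  map_one' := hd.map_one x
  map_mul' g h := by rw [Subgroup.coe_mul, hd, show (h : G) • x = x from h.2]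

end IsCocycle

theorem exists_isCocycle_of_freeGroupBasis {ι F X K : Type*} [Group F] [MulAction F X] [Group K]
    (b : FreeGroupBasis ι F) (c : ι → X → K) :
    ∃ d : F → X → K, IsCocycle d ∧ ∀ i, d (b i) = c i := by
  -- Cocycles correspond to sections of `(X → K) ⋊ F → F`, by `d g x = (Φ g).left (g • x)`.
  let Φ : F →* (X → K) ⋊[mulAutArrow] F := b.lift fun i => ⟨fun x => c i ((b i)⁻¹ • x), b i⟩
  have hΦ (i : ι) : Φ (b i) = ⟨fun x => c i ((b i)⁻¹ • x), b i⟩ := by simp [Φ]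
  have hright (g : F) : (Φ g).right = g := by
    have hid : SemidirectProduct.rightHom.comp Φ = MonoidHom.id F :=
      b.ext_hom _ _ fun i => by simp [hΦ]
    exact DFunLike.congr_fun hid g
  refine ⟨fun g x => (Φ g).left (g • x), fun g h x => ?_, fun i => ?_⟩
  · simp only [map_mul, SemidirectProduct.mul_left, Pi.mul_apply, hright, mul_smul]
    congr 1
    exact congrArg (Φ h).left (inv_smul_smul g (h • x))
  · simp [hΦ]

theorem IsCocycle.exists_extension {ι F X Y K : Type*} [Group F] [MulAction F X] [Group K]
    (b : FreeGroupBasis ι F) (J : Set ι) [MulAction (Subgroup.closure (b '' J)) Y]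
    (f : Y →[Subgroup.closure (b '' J)] X) (hf : Function.Injective f)
    {e : Subgroup.closure (b '' J) → Y → K} (he : IsCocycle e) :
    ∃ d : F → X → K, IsCocycle d ∧ ∀ (a : Subgroup.closure (b '' J)) y, d a (f y) = e a y := by
  classical
  let gen (i : J) : Subgroup.closure (b '' J) := ⟨b i, Subgroup.subset_closure ⟨i, i.2, rfl⟩⟩
  obtain ⟨d, hd, hdb⟩ := exists_isCocycle_of_freeGroupBasis b
    (Function.extend (↑) (fun i : J => Function.extend f (e (gen i)) 1) 1)
  have hres : IsCocycle fun (a : Subgroup.closure (b '' J)) y => d a (f y) := fun a a' y => by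
    simpa [Subgroup.smul_def] using hd a a' (f y)
  refine ⟨d, hd, fun a y => ?_⟩
  refine congrFun₂ (hres.eq_of_eqOn_dense he Subgroup.closure_closure_coe_preimage ?_) a y
  rintro ⟨_, _⟩ ⟨i, hi, rfl⟩
  ext y
  simp only [hdb]
  rw [Subtype.val_injective.extend_apply _ _ (⟨i, hi⟩ : J), hf.extend_apply]

theorem exists_isCocycle_orbit_stabilizer {A X : Type*} [Group A] [MulAction A X] (o : X) :
    ∃ e : A → MulAction.orbit A o → MulAction.stabilizer A o, IsCocycle e ∧
      ∀ k : MulAction.stabilizer A o, e k ⟨o, MulAction.mem_orbit_self o⟩ = k := by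
  classical
  let o' : MulAction.orbit A o := ⟨o, MulAction.mem_orbit_self o⟩
  choose s hs using fun y : MulAction.orbit A o => y.2
  let t := Function.update s o' 1
  have ht (y : MulAction.orbit A o) : t y • o = y := by
    obtain rfl | hy := eq_or_ne y o'
    · simp [t, o']
    · simpa [t, hy] using hs y
  refine ⟨fun a y => ⟨(t (a • y))⁻¹ * a * t y, ?_⟩, fun a a' y => ?_, fun k => ?_⟩
  · rw [MulAction.mem_stabilizer_iff, mul_smul, mul_smul, ht, inv_smul_eq_iff, ht,
      MulAction.orbit.coe_smul]
  · ext; simp [mul_smul, mul_assoc]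
  · have hk : (k : A) • o' = o' := Subtype.ext k.2
    have ht' : t o' = 1 := Function.update_self ..
    ext
    change (t ((k : A) • o'))⁻¹ * k * t o' = k
    simp [hk, ht']

theorem exists_retraction_stabilizer {ι F X : Type*} [Group F] [MulAction F X]
    (b : FreeGroupBasis ι F) (J : Set ι) (o : X) :
    ∃ ρ : MulAction.stabilizer F o →* MulAction.stabilizer (Subgroup.closure (b '' J)) o,
      ∀ k : MulAction.stabilizer (Subgroup.closure (b '' J)) o, ρ ⟨k, k.2⟩ = k := by
  obtain ⟨e, he, heo⟩ := exists_isCocycle_orbit_stabilizer (A := Subgroup.closure (b '' J)) o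
  obtain ⟨d, hd, hde⟩ := he.exists_extension b J ⟨Subtype.val, fun _ _ => rfl⟩ Subtype.val_injective
  exact ⟨hd.stabilizerHom o, fun k => (hde k ⟨o, _⟩).trans (heo k)⟩

theorem exists_retraction_inf_closure {ι F : Type*} [Group F] (b : FreeGroupBasis ι F) (J : Set ι)
    (G : Subgroup F) : ∃ ρ : G →* ↥(G ⊓ Subgroup.closure (b '' J)),
      Function.LeftInverse ρ (Subgroup.inclusion inf_le_left) := by
  let o : F ⧸ G := (1 : F)
  have hG : MulAction.stabilizer F o = G := MulAction.stabilizer_quotient G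
  obtain ⟨ρ, hρ⟩ := exists_retraction_stabilizer b J o
  let τ : MulAction.stabilizer (Subgroup.closure (b '' J)) o →* F :=
    (Subgroup.subtype _).comp (Subgroup.subtype _)
  have hτ k : τ k ∈ G ⊓ Subgroup.closure (b '' J) := ⟨hG.le k.2, k.1.2⟩
  refine ⟨(τ.codRestrict _ hτ).comp (ρ.comp (Subgroup.inclusion hG.ge)), fun k => Subtype.ext ?_⟩
  exact congrArg τ (hρ ⟨⟨k, k.2.2⟩, hG.ge k.2.1⟩)

section Echelon

theorem rk_inf_closure_add_one_le {ι : Type*} {F : Type u} [Group F] (b : FreeGroupBasis ι F)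
    (J : Set ι) {G : Subgroup F} (hG : ¬ G ≤ Subgroup.closure (b '' J)) :
    rk (G ⊓ Subgroup.closure (b '' J)) + 1 ≤ rk G := by
  have : IsFreeGroup F := b.isFreeGroup
  obtain ⟨ρ, hρ⟩ := exists_retraction_inf_closure b J G
  refine rk_add_one_le_of_surjective hρ.surjective fun hinj => hG fun g hg => ?_
  have hfix : Subgroup.inclusion inf_le_left (ρ ⟨g, hg⟩) = ⟨g, hg⟩ := hinj (hρ _)
  have hval : (ρ ⟨g, hg⟩ : F) = g := congrArg Subtype.val hfix
  exact hval ▸ (ρ ⟨g, hg⟩).2.2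

variable {n : ℕ} {F : Type u} [Group F] {x : Fin n → F}

theorem stage_mono (x : Fin n → F) : Monotone (stage x) := fun _ _ hij =>
  Subgroup.closure_mono (Set.image_mono fun _ hk => lt_of_lt_of_le hk hij)

theorem IsOrderedBasis.stage_eq_top (hx : IsOrderedBasis x) : stage x n = ⊤ := by
  have huniv : {j : Fin n | (j : ℕ) < n} = Set.univ := Set.eq_univ_of_forall Fin.is_lt
  rw [stage, huniv, Set.image_univ, ← FreeGroup.lift_surjective_iff_closure_range_eq_top]
  exact hx.2

theorem IsOrderedBasis.rk_inf_stage_add_one_le (hx : IsOrderedBasis x) {G : Subgroup F} {i : ℕ}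
    (hG : ¬ G ≤ stage x i) : rk (G ⊓ stage x i) + 1 ≤ rk G := by
  rw [stage, ← hx.coe_freeGroupBasis] at hG ⊢
  exact rk_inf_closure_add_one_le hx.freeGroupBasis _ hG

theorem InEchelonForm.rk_inf_stage_le (hx : IsOrderedBasis x) {H G : Subgroup F}
    (hH : InEchelonForm x H) (hHG : H ≤ G) {i : ℕ} (hi : i ≤ n) :
    rk (H ⊓ stage x i) ≤ rk (G ⊓ stage x i) := by
  induction i with
  | zero => simp [stage]
  | succ i ih =>
    have hmono : stage x i ≤ stage x (i + 1) := stage_mono x i.le_succ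
    by_cases hG : G ⊓ stage x (i + 1) ≤ stage x i
    · have hstable {K : Subgroup F} (hK : K ≤ G) : K ⊓ stage x (i + 1) = K ⊓ stage x i :=
        le_antisymm (le_inf inf_le_left ((inf_le_inf_right _ hK).trans hG))
          (inf_le_inf_left _ hmono)
      rw [hstable hHG, hstable le_rfl]
      exact ih (by lia)
    · calc rk (H ⊓ stage x (i + 1)) ≤ rk (H ⊓ stage x i) + 1 := hH i hi
        _ ≤ rk (G ⊓ stage x i) + 1 := by gcongr; exact ih (by lia)
        _ = rk (G ⊓ stage x (i + 1) ⊓ stage x i) + 1 := by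
          rw [inf_assoc, inf_eq_right.2 hmono]
        _ ≤ rk (G ⊓ stage x (i + 1)) := hx.rk_inf_stage_add_one_le hG

end Echelon

/-- Echelon subgroups of free groups are compressed. -/
theorem echelon_compressed (n : ℕ) (H G : Subgroup (FreeGroup (Fin n)))
    (hH : IsEchelon H) (hHG : H ≤ G) : rk H ≤ rk G := by
  obtain ⟨x, hx, hE⟩ := hH
  simpa [hx.stage_eq_top] using hE.rk_inf_stage_le hx hHG le_rfl
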